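/- arXiv:1807.03650 — 2 statements merged into one kernel-verified Lean document; each statement's English description precedes it below -/
import Mathlib

section
/- In the line model with M layers, for every n ≥ 1, the probability Q_{0^{(n)}} that all n links e_1,…,e_n are inactive equals [1 − n q² + P_{n+1}(q)]^M, where 0^{(n)} is the all-zeros configuration of length n. -/
open MeasureTheory ProbabilityTheory Finset

/-- Bernoulli measure on `Bool` with success probability `p`. -/
noncomputable def bern (p : ℝ) : Measure Bool :=
  ENNReal.ofReal p • Measure.dirac true + ENNReal.ofReal (1 - p) • Measure.dirac false

/-- The line model with `M` layers, `n` links (hence `n+1` nodes), node activation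
probability `q`: every node is active on every layer independently with probability `q`. -/
noncomputable def lineμ (M n : ℕ) (q : ℝ) : Measure ((Fin M × Fin (n + 1)) → Bool) :=
  Measure.pi fun _ => bern q

/-- Link `e_{j+1} = (j+1, j+2)` (1-based) is active: some layer has both endpoints active. -/
def act {M n : ℕ} (j : Fin n) (ω : (Fin M × Fin (n + 1)) → Bool) : Prop :=
  ∃ m : Fin M, ω (m, j.castSucc) = true ∧ ω (m, j.succ) = true

/-- The event that the links are in configuration `x` (1-based: link `e_j` is active
iff `x j = 1`). -/
def cfg {M n : ℕ} (x : ℕ → ℝ) : Set ((Fin M × Fin (n + 1)) → Bool) :=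
  {ω | ∀ j : Fin n, (act j ω ↔ x (j.val + 1) = 1)}

/-- The event that the set of layers on which the last node `n+1` is active equals `A`. -/
def lastIn {M n : ℕ} (A : Finset (Fin M)) : Set ((Fin M × Fin (n + 1)) → Bool) :=
  {ω | ∀ k : Fin M, (ω (k, Fin.last n) = true ↔ k ∈ A)}

/-- `Q_{x^{(n)}}(m)`: conditional probability of configuration `x` given that the set of
layers on which node `n+1` is active equals the fixed set `A` (of cardinality `m`). -/
noncomputable def Qcond (M n : ℕ) (q : ℝ) (x : ℕ → ℝ) (A : Finset (Fin M)) : ℝ :=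
  (ProbabilityTheory.cond (lineμ M n q) (lastIn A) (cfg x)).toReal

/-- The polynomials `P_k(q)`: `P₁ = P₂ = 0`,
`P_k = (1−q) P_{k−1} + q(1−q) P_{k−2} + q³ + (k−3) q⁴` for `k ≥ 3`. -/
noncomputable def Ppoly (q : ℝ) : ℕ → ℝ
  | 0 => 0
  | 1 => 0
  | 2 => 0
  | (k + 3) => (1 - q) * Ppoly q (k + 2) + q * (1 - q) * Ppoly q (k + 1) + q ^ 3 + (k : ℝ) * q ^ 4

/-- `Q_{x^{(n)}}`: unconditional probability of configuration `x`. -/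
noncomputable def Qabs (M n : ℕ) (q : ℝ) (x : ℕ → ℝ) : ℝ :=
  ((lineμ M n q) (cfg x)).toReal

/-!
No link is active exactly when, on every layer, no two consecutive nodes are both active. The layers
are independent, so this has probability `c (n + 1) ^ M`, where `c k` is the probability that a row
of `k` independent nodes has no two consecutive active ones. If the first node of a row is inactive,
it does not constrain the others; if it is active, the second node must be inactive. Hence
`c (k + 2) = (1 - q) * c (k + 1) + q * (1 - q) * c k` with `c 0 = c 1 = 1`. The defining recurrence
of `Ppoly` says that `1 - n * q ^ 2 + Ppoly q (n + 1)` satisfies the recurrence of `c (n + 1)`,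
with the same values at `n = 0` and `n = 1`.
-/

/-- No two adjacent sites of `ι` are both occupied, where adjacency is the covering relation
of the order. For `ι = Fin n` these are the states of a single layer with `n` nodes that activate
none of its `n - 1` links. -/
def NoAdjacent {ι : Type*} [Preorder ι] (σ : ι → Bool) : Prop :=
  ∀ i j, i ⋖ j → ¬(σ i = true ∧ σ j = true)

theorem NoAdjacent.of_subsingleton {ι : Type*} [Preorder ι] [Subsingleton ι] (σ : ι → Bool) :
    NoAdjacent σ :=
  fun i j hij => (hij.ne (Subsingleton.elim i j)).elim

theorem noAdjacent_iff_forall_castSucc_succ {n : ℕ} {σ : Fin (n + 1) → Bool} :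
    NoAdjacent σ ↔ ∀ j : Fin n, ¬(σ j.castSucc = true ∧ σ j.succ = true) := by
  refine ⟨fun h j => h _ _ (by simp), fun h i j hij => ?_⟩
  have hval : (i : ℕ) + 1 = j := by simpa using hij
  obtain ⟨k, rfl⟩ : ∃ k : Fin n, k.castSucc = i := ⟨⟨i, by omega⟩, rfl⟩
  obtain rfl : k.succ = j := Fin.ext hval
  exact h k

theorem noAdjacent_cons_false {n : ℕ} {σ : Fin n → Bool} :
    NoAdjacent (Fin.cons false σ : Fin (n + 1) → Bool) ↔ NoAdjacent σ := by
  simp [NoAdjacent, Fin.forall_fin_succ]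

theorem noAdjacent_cons_true_cons {n : ℕ} {b : Bool} {σ : Fin n → Bool} :
    NoAdjacent (Fin.cons true (Fin.cons b σ : Fin (n + 1) → Bool) : Fin (n + 2) → Bool) ↔
      b = false ∧ NoAdjacent σ := by
  cases b <;> simp [NoAdjacent, Fin.forall_fin_succ]

theorem measure_pi_forall_row_mem {ι κ X : Type*} [Fintype ι] [Fintype κ] [MeasurableSpace X]
    (μ : ι → κ → Measure X) [∀ i k, IsProbabilityMeasure (μ i k)] (S : ι → Set (κ → X)) :
    Measure.pi (fun p : ι × κ => μ p.1 p.2) {ω | ∀ i, (fun k => ω (i, k)) ∈ S i} =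
      ∏ i, Measure.pi (μ i) (S i) := by
  have hcurry : (Measure.pi fun p : ι × κ => μ p.1 p.2).map (MeasurableEquiv.curry ι κ X) =
      Measure.pi fun i => Measure.pi (μ i) := by
    simpa only [Measure.infinitePi_eq_pi] using Measure.infinitePi_map_curry μ
  rw [← Measure.pi_pi, ← hcurry, MeasurableEquiv.map_apply]
  congr 1
  ext ω
  simp only [Set.mem_preimage, Set.mem_univ_pi]
  rfl

theorem measure_pi_fin_succ_eq_lintegral {n : ℕ} {X : Fin (n + 1) → Type*}
    [∀ i, MeasurableSpace (X i)] (μ : ∀ i, Measure (X i)) [∀ i, SigmaFinite (μ i)]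
    {S : Set (∀ i, X i)} (hS : MeasurableSet S) :
    Measure.pi μ S =
      ∫⁻ x, Measure.pi (fun i : Fin n => μ i.succ) {σ | Fin.cons x σ ∈ S} ∂μ 0 := by
  rw [← (measurePreserving_piFinSuccAbove μ 0).symm.measure_preimage_equiv,
    Measure.prod_apply (MeasurableEquiv.measurable _ hS)]
  refine lintegral_congr fun x => congrArg _ (Set.ext fun σ => ?_)
  change Fin.insertNth 0 x σ ∈ S ↔ Fin.cons x σ ∈ S
  rw [Fin.insertNth_zero]
  rfl

theorem measure_pi_fin_succ_bool {n : ℕ} (μ : Fin (n + 1) → Measure Bool) [∀ i, SigmaFinite (μ i)]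
    (S : Set (Fin (n + 1) → Bool)) :
    Measure.pi μ S =
      μ 0 {true} * Measure.pi (fun i : Fin n => μ i.succ) {σ | Fin.cons true σ ∈ S} +
      μ 0 {false} * Measure.pi (fun i : Fin n => μ i.succ) {σ | Fin.cons false σ ∈ S} := by
  rw [measure_pi_fin_succ_eq_lintegral _ (Set.toFinite S).measurableSet, lintegral_fintype,
    Fintype.sum_bool, mul_comm, mul_comm (μ 0 {false})]

theorem measureReal_noAdjacent_of_subsingleton {ι : Type*} [Preorder ι] [Subsingleton ι]
    (μ : Measure (ι → Bool)) [IsProbabilityMeasure μ] : μ.real {σ | NoAdjacent σ} = 1 := by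
  simp only [NoAdjacent.of_subsingleton, Set.ofPred_true, probReal_univ]

theorem measure_pi_noAdjacent_add_two (ν : Measure Bool) [SigmaFinite ν] (n : ℕ) :
    Measure.pi (fun _ => ν) {σ : Fin (n + 2) → Bool | NoAdjacent σ} =
      ν {false} * Measure.pi (fun _ => ν) {σ : Fin (n + 1) → Bool | NoAdjacent σ} +
      ν {true} * ν {false} * Measure.pi (fun _ => ν) {σ : Fin n → Bool | NoAdjacent σ} := by
  have htrue : Measure.pi (fun _ => ν)
      {σ : Fin (n + 1) → Bool | NoAdjacent (Fin.cons true σ : Fin (n + 2) → Bool)} =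
      ν {false} * Measure.pi (fun _ => ν) {σ : Fin n → Bool | NoAdjacent σ} := by
    simp [measure_pi_fin_succ_bool (n := n), noAdjacent_cons_true_cons]
  simp only [measure_pi_fin_succ_bool (n := n + 1), Set.mem_ofPred_eq, noAdjacent_cons_false, htrue]
  ring

theorem isProbabilityMeasure_bern {q : ℝ} (hq : q ∈ Set.Icc (0 : ℝ) 1) :
    IsProbabilityMeasure (bern q) := by
  constructor
  simp [bern, ← ENNReal.ofReal_add hq.1 (sub_nonneg.2 hq.2)]

theorem bern_singleton_true (q : ℝ) : bern q {true} = ENNReal.ofReal q := by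
  simp [bern]

theorem bern_singleton_false (q : ℝ) : bern q {false} = ENNReal.ofReal (1 - q) := by
  simp [bern]

theorem measureReal_pi_bern_noAdjacent_add_two {q : ℝ} (hq : q ∈ Set.Icc (0 : ℝ) 1) (n : ℕ) :
    (Measure.pi fun _ => bern q).real {σ : Fin (n + 2) → Bool | NoAdjacent σ} =
      (1 - q) * (Measure.pi fun _ => bern q).real {σ : Fin (n + 1) → Bool | NoAdjacent σ} +
      q * (1 - q) * (Measure.pi fun _ => bern q).real {σ : Fin n → Bool | NoAdjacent σ} := by
  have := isProbabilityMeasure_bern hq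
  simp only [measureReal_def, measure_pi_noAdjacent_add_two, bern_singleton_true,
    bern_singleton_false]
  rw [ENNReal.toReal_add (by finiteness) (by finiteness)]
  simp [hq.1, hq.2]

theorem measureReal_pi_bern_noAdjacent_eq_Ppoly {q : ℝ} (hq : q ∈ Set.Icc (0 : ℝ) 1) (n : ℕ) :
    (Measure.pi fun _ => bern q).real {σ : Fin (n + 1) → Bool | NoAdjacent σ} =
      1 - n * q ^ 2 + Ppoly q (n + 1) := by
  have := isProbabilityMeasure_bern hq
  have hone : (Measure.pi fun _ => bern q).real {σ : Fin 1 → Bool | NoAdjacent σ} = 1 :=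
    measureReal_noAdjacent_of_subsingleton _
  induction n using Nat.twoStepInduction with
  | zero => simp [hone, Ppoly]
  | one =>
    rw [measureReal_pi_bern_noAdjacent_add_two hq, hone, measureReal_noAdjacent_of_subsingleton,
      Ppoly]
    push_cast
    ring
  | more n ih ih' =>
    rw [measureReal_pi_bern_noAdjacent_add_two hq, ih, ih', Ppoly]
    push_cast
    ring

theorem cfg_zero_eq_forall_noAdjacent (M n : ℕ) :
    cfg (M := M) (n := n) (fun _ => 0) = {ω | ∀ m, NoAdjacent fun i => ω (m, i)} := by
  ext ω
  simp only [cfg, act, noAdjacent_iff_forall_castSucc_succ, Set.mem_ofPred_eq, zero_ne_one,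
    iff_false, not_exists]
  exact forall_comm

/-- the probability that all `n` links are inactive equals
`[1 − n q² + P_{n+1}(q)]^M`. -/
theorem stmt5 (M : ℕ) (hM : 1 ≤ M) (q : ℝ) (hq : q ∈ Set.Ioo (0 : ℝ) 1)
    (n : ℕ) (hn : 1 ≤ n) :
    Qabs M n q (fun _ => 0) = (1 - (n : ℝ) * q ^ 2 + Ppoly q (n + 1)) ^ M := by
  have hq' := Set.Ioo_subset_Icc_self hq
  have := isProbabilityMeasure_bern hq'
  calc Qabs M n q (fun _ => 0)
      = (Measure.pi fun _ : Fin M × Fin (n + 1) => bern q).real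
          {ω | ∀ m, NoAdjacent fun i => ω (m, i)} := by
        rw [Qabs, lineμ, cfg_zero_eq_forall_noAdjacent, measureReal_def]
    _ = (Measure.pi fun _ => bern q).real {σ : Fin (n + 1) → Bool | NoAdjacent σ} ^ M := by
        have hrows := measure_pi_forall_row_mem (fun (_ : Fin M) (_ : Fin (n + 1)) => bern q)
          fun _ => {σ | NoAdjacent σ}
        simp only [Set.mem_ofPred_eq] at hrows
        simp [measureReal_def, hrows]
    _ = (1 - (n : ℝ) * q ^ 2 + Ppoly q (n + 1)) ^ M := by
        rw [measureReal_pi_bern_noAdjacent_eq_Ppoly hq']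
end

section
/- In the line model with M layers, for every n ≥ 1, every x^{(n)} = (x_1,…,x_n) ∈ {0,1}^n and every m ∈ {0,1,…,M}: Q_{x^{(n)}}(m) = Σ_{j=0}^{n} h_j Q_{0^{(n−j)}}(m) ∏_{l=j+1}^{n} ((1−x_l) − x_l), with the conventions Q_{0^{(0)}}(m) = 1 and that empty products equal 1. -/
open MeasureTheory ProbabilityTheory Finset

/-- The coefficients `h_j`: `h₀ = 1`, `h₁ = x₁`, and for `j ≥ 2`,
`h_j = x_j ∑_{r=0}^{j−1} [1−(j−1−r)q² + P_{j−r}(q)]^M h_r ∏_{l=r+1}^{j−1} ((1−x_l) − x_l)`. -/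
noncomputable def hcoef (M : ℕ) (q : ℝ) (x : ℕ → ℝ) : ℕ → ℝ
  | 0 => 1
  | 1 => x 1
  | (j + 2) => x (j + 2) *
      ∑ r ∈ (Finset.range (j + 2)).attach,
        (1 - ((j : ℝ) + 1 - (r.1 : ℝ)) * q ^ 2 + Ppoly q (j + 2 - r.1)) ^ M
          * hcoef M q x r.1
          * ∏ l ∈ Finset.Icc (r.1 + 1) (j + 1), ((1 - x l) - x l)
  termination_by j => j
  decreasing_by
    have := Finset.mem_range.mp r.2
    omega

/-- `Q_{0^{(k)}}(m)` with the convention `Q_{0^{(0)}}(·) = 1`. -/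
noncomputable def Q0c (M : ℕ) (q : ℝ) (A : Finset (Fin M)) : ℕ → ℝ
  | 0 => 1
  | (k + 1) => Qcond M (k + 1) q (fun _ => 0) A

/-! The activity patterns `{layers} → Bool` of the successive nodes form a chain of independent
states, and the event `cfg x` is a product of kernels in adjacent states. For `x_j ∈ {0, 1}` the
kernel of link `j` equals `x_j + ((1 - x_j) - x_j) Z`, where `Z` is the kernel of an inactive link.
The term `x_j` decouples the nodes on its two sides, so expanding the kernels according to the last
link where it is chosen gives a renewal equation. Its weights are the probabilities
`[1 - kq² + P_{k+1}]^M` that `k` consecutive links are all inactive: `Z` factorizes over the layers,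
on each of which the probability of no two adjacent active nodes obeys a two-step recursion. -/

section Chain

variable {R S : Type*} [CommSemiring R] [Fintype S]

/-- The total weight of the first `n` of `n + 1` successive states with weights `w`, multiplied by
the interactions `K 0, …, K (n - 1)` of adjacent states, as a function of the last state. If `w` is
a probability vector, this is a conditional expectation given the last state. -/
def chainWeight (w : S → R) (K : ℕ → S → S → R) : ℕ → S → R
  | 0, _ => 1
  | n + 1, s => ∑ t, w t * chainWeight w K n t * K n t s

/-- The partition function of the chain of `n + 1` states: the last state is summed over as well. -/
def chainTotal (w : S → R) (K : ℕ → S → S → R) (n : ℕ) : R :=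
  ∑ s, w s * chainWeight w K n s

lemma sum_paths_eq_sum_chainWeight (w : S → R) (K : ℕ → S → S → R) (n : ℕ) (f : S → R) :
    ∑ σ : Fin (n + 1) → S,
        (∏ i, w (σ i)) * (∏ j : Fin n, K j (σ j.castSucc) (σ j.succ)) * f (σ (Fin.last n))
      = ∑ s, w s * chainWeight w K n s * f s := by
  induction n generalizing f with
  | zero => simp [← (Equiv.funUnique (Fin 1) S).symm.sum_comp, chainWeight]
  | succ n ih =>
    have sum_init (s : S) :
        ∑ σ : Fin (n + 1) → S, (∏ i, w (σ i)) *
            (∏ j : Fin n, K j (σ j.castSucc) (σ j.succ)) * K n (σ (Fin.last n)) s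
          = chainWeight w K (n + 1) s := ih fun t => K n t s
    rw [← (Fin.snocEquiv fun _ => S).sum_comp, Fintype.sum_prod_type]
    refine Finset.sum_congr rfl fun s _ => ?_
    rw [← sum_init, Finset.mul_sum, Finset.sum_mul]
    refine Finset.sum_congr rfl fun σ _ => ?_
    simp only [Fin.snocEquiv_apply, Fin.prod_univ_castSucc (n := n + 1),
      Fin.prod_univ_castSucc (n := n), Fin.snoc_castSucc, Fin.snoc_last, Fin.succ_last,
      Fin.succ_castSucc, Fin.val_castSucc, Fin.val_last]
    ring

lemma chainWeight_one {w : S → R} (hw : ∑ s, w s = 1) (n : ℕ) (s : S) :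
    chainWeight w (fun _ _ _ => 1) n s = 1 := by
  induction n generalizing s with
  | zero => rfl
  | succ n ih => simp only [chainWeight, ih, mul_one, hw]

section Pi

variable {ι : Type*} [Fintype ι] [DecidableEq ι] {T : ι → Type*} [∀ i, Fintype (T i)]
  (w : ∀ i, T i → R) (K : ∀ i, ℕ → T i → T i → R)

lemma chainWeight_pi (n : ℕ) (s : ∀ i, T i) :
    chainWeight (fun s => ∏ i, w i (s i)) (fun j t s => ∏ i, K i j (t i) (s i)) n s
      = ∏ i, chainWeight (w i) (K i) n (s i) := by
  induction n generalizing s with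
  | zero => simp only [chainWeight, Finset.prod_const_one]
  | succ n ih => simp only [chainWeight, ih, Fintype.prod_sum, Finset.prod_mul_distrib]

lemma chainTotal_pi (n : ℕ) :
    chainTotal (fun s : ∀ i, T i => ∏ i, w i (s i)) (fun j t s => ∏ i, K i j (t i) (s i)) n
      = ∏ i, chainTotal (w i) (K i) n := by
  simp only [chainTotal, chainWeight_pi, Fintype.prod_sum, Finset.prod_mul_distrib]

end Pi

lemma chainWeight_succ_of_affine {w : S → R} {K : ℕ → S → S → R} {n : ℕ} {a b : R}
    {Z : S → S → R} (hK : ∀ t s, K n t s = a + b * Z t s) (s : S) :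
    chainWeight w K (n + 1) s
      = a * chainTotal w K n + b * ∑ t, w t * chainWeight w K n t * Z t s := by
  simp only [chainWeight, chainTotal, hK, Finset.mul_sum, ← Finset.sum_add_distrib]
  exact Finset.sum_congr rfl fun t _ => by ring

theorem chainWeight_renewal {w : S → R} {K : ℕ → S → S → R} {Z : S → S → R} {a b h : ℕ → R} {n : ℕ}
    (hK : ∀ j < n, ∀ t s, K j t s = a (j + 1) + b (j + 1) * Z t s) (h_zero : h 0 = 1)
    (h_succ : ∀ k, h (k + 1) = a (k + 1) * ∑ r ∈ range (k + 1),
      chainTotal w (fun _ => Z) (k - r) * h r * ∏ l ∈ Icc (r + 1) k, b l) (s : S) :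
    chainWeight w K n s = ∑ j ∈ range (n + 1),
      h j * chainWeight w (fun _ => Z) (n - j) s * ∏ l ∈ Icc (j + 1) n, b l := by
  induction n generalizing s with
  | zero => simp [chainWeight, h_zero]
  | succ n ih =>
    have ih := ih fun j hj => hK j (hj.trans n.lt_succ_self)
    have decoupled : a (n + 1) * chainTotal w K n = h (n + 1) := by
      rw [h_succ, chainTotal]
      simp only [ih, chainTotal, Finset.mul_sum, Finset.sum_mul]
      rw [Finset.sum_comm]
      exact Finset.sum_congr rfl fun j _ => Finset.sum_congr rfl fun t _ => by ring
    have coupled : b (n + 1) * ∑ t, w t * chainWeight w K n t * Z t s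
        = ∑ j ∈ range (n + 1), h j * chainWeight w (fun _ => Z) (n + 1 - j) s
            * ∏ l ∈ Icc (j + 1) (n + 1), b l := by
      simp only [ih, Finset.mul_sum, Finset.sum_mul]
      rw [Finset.sum_comm]
      refine Finset.sum_congr rfl fun j hj => ?_
      have hj : j ≤ n := Finset.mem_range_succ_iff.mp hj
      rw [Nat.succ_sub hj, chainWeight, Finset.prod_Icc_succ_top (by omega), Finset.mul_sum,
        Finset.sum_mul]
      exact Finset.sum_congr rfl fun t _ => by ring
    rw [chainWeight_succ_of_affine (hK n n.lt_succ_self), decoupled, coupled,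
      Finset.sum_range_succ _ (n + 1), add_comm]
    simp [chainWeight]

end Chain

section SingleLayer

/-- The point mass that a Bernoulli variable with success probability `q` gives to `b`. -/
def bernWeight (q : ℝ) (b : Bool) : ℝ := bif b then q else 1 - q

/-- The indicator that two adjacent nodes are not both active on a layer: the factor that a single
layer contributes to the kernel of an inactive link. -/
def avoidKernel (c b : Bool) : ℝ := bif c && b then 0 else 1

lemma sum_bernWeight (q : ℝ) : ∑ b, bernWeight q b = 1 := by
  simp [bernWeight]

lemma bernWeight_pos {q : ℝ} (hq : q ∈ Set.Ioo (0 : ℝ) 1) (b : Bool) : 0 < bernWeight q b := by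
  cases b
  · exact sub_pos.mpr hq.2
  · exact hq.1

lemma chainTotal_avoidKernel_add_two (q : ℝ) (n : ℕ) :
    chainTotal (bernWeight q) (fun _ => avoidKernel) (n + 2)
      = (1 - q) * chainTotal (bernWeight q) (fun _ => avoidKernel) (n + 1)
        + q * (1 - q) * chainTotal (bernWeight q) (fun _ => avoidKernel) n := by
  set W := chainWeight (bernWeight q) (fun _ => avoidKernel) with hW
  have last_active (k : ℕ) : W (k + 1) true = (1 - q) * W k false := by
    simp [hW, chainWeight, bernWeight, avoidKernel]
  have last_inactive (k : ℕ) :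
      W (k + 1) false = chainTotal (bernWeight q) (fun _ => avoidKernel) k := by
    simp [hW, chainWeight, chainTotal, avoidKernel]
  have total (k : ℕ) : chainTotal (bernWeight q) (fun _ => avoidKernel) k
      = q * W k true + (1 - q) * W k false := by
    simp [hW, chainTotal, bernWeight]
  rw [total (n + 2), last_active, last_inactive, last_inactive]
  ring

lemma chainTotal_avoidKernel (q : ℝ) (n : ℕ) :
    chainTotal (bernWeight q) (fun _ => avoidKernel) n = 1 - n * q ^ 2 + Ppoly q (n + 1) := by
  induction n using Nat.twoStepInduction with
  | zero => simp [chainTotal, chainWeight, bernWeight, Ppoly]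
  | one =>
    simp only [chainTotal, chainWeight, bernWeight, avoidKernel, Fintype.sum_bool, Ppoly]
    norm_num
    ring
  | more n ih ih' =>
    rw [chainTotal_avoidKernel_add_two, ih, ih', Ppoly]
    push_cast
    ring

end SingleLayer

section Layers

variable {L : Type*}

/-- Two adjacent nodes with activity patterns `t` and `s` are joined by an active link. -/
def SharesLayer (t s : L → Bool) : Prop := ∃ k, t k = true ∧ s k = true

open Classical in
/-- The indicator that the link between nodes with activity patterns `t` and `s` is in state `y`,
where `y = 1` encodes an active link and any other value an inactive one. -/
noncomputable def linkKernel (y : ℝ) (t s : L → Bool) : ℝ :=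
  if SharesLayer t s ↔ y = 1 then 1 else 0

lemma linkKernel_eq_affine {y : ℝ} (hy : y = 0 ∨ y = 1) (t s : L → Bool) :
    linkKernel y t s = y + ((1 - y) - y) * linkKernel 0 t s := by
  rcases hy with rfl | rfl <;> by_cases h : SharesLayer t s <;> simp [linkKernel, h]

variable [Fintype L]

/-- The probability that a node is active exactly on the layers selected by `s`. -/
def nodeWeight (q : ℝ) (s : L → Bool) : ℝ := ∏ k, bernWeight q (s k)

lemma sum_nodeWeight [DecidableEq L] (q : ℝ) : ∑ s : L → Bool, nodeWeight q s = 1 := by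
  simp only [nodeWeight, ← Fintype.prod_sum fun _ : L => bernWeight q, sum_bernWeight,
    Finset.prod_const_one]

lemma nodeWeight_pos {q : ℝ} (hq : q ∈ Set.Ioo (0 : ℝ) 1) (s : L → Bool) : 0 < nodeWeight q s :=
  Finset.prod_pos fun k _ => bernWeight_pos hq (s k)

lemma linkKernel_zero (t s : L → Bool) : linkKernel 0 t s = ∏ k, avoidKernel (t k) (s k) := by
  have avoidKernel_eq (c b : Bool) :
      avoidKernel c b = if ¬(c = true ∧ b = true) then 1 else 0 := by
    cases c <;> cases b <;> simp [avoidKernel]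
  simp [linkKernel, SharesLayer, avoidKernel_eq, Fintype.prod_boole]

lemma chainTotal_linkKernel_zero [DecidableEq L] (q : ℝ) (n : ℕ) :
    chainTotal (nodeWeight q) (fun _ => linkKernel (L := L) 0) n
      = (1 - n * q ^ 2 + Ppoly q (n + 1)) ^ Fintype.card L := by
  calc
    _ = chainTotal (fun s : L → Bool => ∏ k, bernWeight q (s k))
          (fun _ t s => ∏ k, avoidKernel (t k) (s k)) n := by
      congr with _ t s
      exact linkKernel_zero t s
    _ = ∏ _ : L, chainTotal (bernWeight q) (fun _ => avoidKernel) n :=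
      chainTotal_pi (fun _ : L => bernWeight q) (fun _ _ => avoidKernel) n
    _ = _ := by rw [Finset.prod_const, Finset.card_univ, chainTotal_avoidKernel]

end Layers

lemma hcoef_succ (M : ℕ) (q : ℝ) (x : ℕ → ℝ) (k : ℕ) :
    hcoef M q x (k + 1) = x (k + 1) * ∑ r ∈ range (k + 1),
      (1 - (k - r : ℕ) * q ^ 2 + Ppoly q (k - r + 1)) ^ M * hcoef M q x r
        * ∏ l ∈ Icc (r + 1) k, ((1 - x l) - x l) := by
  cases k with
  | zero => simp [hcoef, Ppoly]
  | succ k =>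
    rw [hcoef, Finset.sum_attach (range (k + 2)) fun r =>
      (1 - ((k : ℝ) + 1 - r) * q ^ 2 + Ppoly q (k + 2 - r)) ^ M * hcoef M q x r
        * ∏ l ∈ Icc (r + 1) (k + 1), ((1 - x l) - x l)]
    congr 1
    refine Finset.sum_congr rfl fun r hr => ?_
    have hr : r ≤ k + 1 := Finset.mem_range_succ_iff.mp hr
    rw [Nat.cast_sub hr, ← Nat.sub_add_comm hr]
    push_cast
    rfl

section LineModel

variable {M n : ℕ} {q : ℝ}

/-- The activity variables regrouped by node: the path of activity patterns of the chain. -/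
def byNode (M n : ℕ) : ((Fin M × Fin (n + 1)) → Bool) ≃ (Fin (n + 1) → Fin M → Bool) :=
  (Equiv.curry _ _ _).trans (Equiv.piComm _)

/-- The activity pattern of a node that is active exactly on the layers in `A`. -/
def activeOn (A : Finset (Fin M)) (k : Fin M) : Bool := decide (k ∈ A)

lemma bern_real_singleton (hq : q ∈ Set.Icc (0 : ℝ) 1) (b : Bool) :
    (bern q).real {b} = bernWeight q b := by
  cases b <;> simp [Measure.real, bern, bernWeight, hq.1, hq.2]

instance isFiniteMeasure_bern (q : ℝ) : IsFiniteMeasure (bern q) :=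
  ⟨by simp [bern, ENNReal.add_lt_top]⟩

instance isFiniteMeasure_lineμ (M n : ℕ) (q : ℝ) : IsFiniteMeasure (lineμ M n q) := by
  unfold lineμ
  infer_instance

lemma lineμ_real_singleton (hq : q ∈ Set.Icc (0 : ℝ) 1) (ω : (Fin M × Fin (n + 1)) → Bool) :
    (lineμ M n q).real {ω} = ∏ i, nodeWeight q (byNode M n ω i) := by
  calc
    (lineμ M n q).real {ω} = ∏ p, (bern q).real {ω p} := by
      simp only [Measure.real, lineμ, Measure.pi_singleton, ENNReal.toReal_prod]
    _ = ∏ i, ∏ k, bernWeight q (ω (k, i)) := by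
      simp only [bern_real_singleton hq, Fintype.prod_prod_type_right]

lemma lineμ_real_eq_sum (hq : q ∈ Set.Icc (0 : ℝ) 1) (E : Set ((Fin M × Fin (n + 1)) → Bool)) :
    (lineμ M n q).real E
      = ∑ σ, (∏ i, nodeWeight q (σ i)) * E.indicator 1 ((byNode M n).symm σ) := by
  rw [← integral_indicator_one (Set.toFinite E).measurableSet, integral_fintype .of_finite,
    ← (byNode M n).symm.sum_comp]
  simp only [lineμ_real_singleton hq, Equiv.apply_symm_apply, smul_eq_mul]

lemma mem_lastIn_iff (A : Finset (Fin M)) (ω : (Fin M × Fin (n + 1)) → Bool) :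
    ω ∈ lastIn A ↔ byNode M n ω (Fin.last n) = activeOn A := by
  rw [funext_iff]
  refine forall_congr' fun k => ?_
  rw [activeOn, Bool.eq_iff_iff (b := decide _), decide_eq_true_iff]
  rfl

lemma indicator_cfg (x : ℕ → ℝ) (ω : (Fin M × Fin (n + 1)) → Bool) :
    (cfg x).indicator 1 ω
      = ∏ j : Fin n, linkKernel (x (j + 1)) (byNode M n ω j.castSucc) (byNode M n ω j.succ) := by
  by_cases hω : ω ∈ cfg x
  · rw [Set.indicator_of_mem hω]
    exact (Finset.prod_eq_one fun j _ => if_pos (hω j)).symm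
  · obtain ⟨j, hj⟩ := not_forall.mp hω
    rw [Set.indicator_of_notMem hω]
    exact (Finset.prod_eq_zero (Finset.mem_univ j) (if_neg hj)).symm

lemma lineμ_real_lastIn_inter (hq : q ∈ Set.Icc (0 : ℝ) 1) (A : Finset (Fin M))
    {E : Set ((Fin M × Fin (n + 1)) → Bool)} {K : ℕ → (Fin M → Bool) → (Fin M → Bool) → ℝ}
    (hE : ∀ ω, E.indicator 1 ω
      = ∏ j : Fin n, K j (byNode M n ω j.castSucc) (byNode M n ω j.succ)) :
    (lineμ M n q).real (lastIn A ∩ E)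
      = nodeWeight q (activeOn A) * chainWeight (nodeWeight q) K n (activeOn A) := by
  classical
  have indicator_lastIn (σ : Fin (n + 1) → Fin M → Bool) :
      (lastIn A).indicator (1 : ((Fin M × Fin (n + 1)) → Bool) → ℝ) ((byNode M n).symm σ)
        = if σ (Fin.last n) = activeOn A then 1 else 0 := by
    simp only [Set.indicator_apply, mem_lastIn_iff, Equiv.apply_symm_apply, Pi.one_apply]
  calc
    _ = ∑ σ : Fin (n + 1) → Fin M → Bool,
          (∏ i, nodeWeight q (σ i)) * (∏ j : Fin n, K j (σ j.castSucc) (σ j.succ))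
            * if σ (Fin.last n) = activeOn A then 1 else 0 := by
      simp only [lineμ_real_eq_sum hq, Set.inter_comm (lastIn A), Set.inter_indicator_one,
        Pi.mul_apply, hE, indicator_lastIn, Equiv.apply_symm_apply, mul_assoc]
    _ = ∑ s, nodeWeight q s * chainWeight (nodeWeight q) K n s
          * if s = activeOn A then 1 else 0 :=
      sum_paths_eq_sum_chainWeight (nodeWeight q) K n fun s => if s = activeOn A then 1 else 0
    _ = _ := by simp

lemma lineμ_real_lastIn (hq : q ∈ Set.Icc (0 : ℝ) 1) (A : Finset (Fin M)) :
    (lineμ M n q).real (lastIn A) = nodeWeight q (activeOn A) := by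
  have h := lineμ_real_lastIn_inter (n := n) (E := Set.univ) (K := fun _ _ _ => 1) hq A (by simp)
  rwa [Set.inter_univ, chainWeight_one (sum_nodeWeight q), mul_one] at h

lemma Qcond_eq_chainWeight (hq : q ∈ Set.Ioo (0 : ℝ) 1) (x : ℕ → ℝ) (A : Finset (Fin M)) :
    Qcond M n q x A
      = chainWeight (nodeWeight q) (fun j => linkKernel (x (j + 1))) n (activeOn A) := by
  have hq' : q ∈ Set.Icc (0 : ℝ) 1 := Set.Ioo_subset_Icc_self hq
  calc
    Qcond M n q x A
      = ((lineμ M n q).real (lastIn A))⁻¹ * (lineμ M n q).real (lastIn A ∩ cfg x) := by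
      rw [Qcond, cond_apply (Set.toFinite _).measurableSet, ENNReal.toReal_mul, ENNReal.toReal_inv]
      rfl
    _ = (nodeWeight q (activeOn A))⁻¹ * (nodeWeight q (activeOn A) * chainWeight (nodeWeight q)
          (fun j => linkKernel (x (j + 1))) n (activeOn A)) := by
      rw [lineμ_real_lastIn hq',
        lineμ_real_lastIn_inter (K := fun j => linkKernel (x (j + 1))) hq' A (indicator_cfg x)]
    _ = _ := inv_mul_cancel_left₀ (nodeWeight_pos hq _).ne' _

lemma Q0c_eq_chainWeight (hq : q ∈ Set.Ioo (0 : ℝ) 1) (A : Finset (Fin M)) (k : ℕ) :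
    Q0c M q A k = chainWeight (nodeWeight q) (fun _ => linkKernel 0) k (activeOn A) := by
  cases k with
  | zero => rfl
  | succ k => exact Qcond_eq_chainWeight hq _ A

end LineModel

/-- `Q_{x^{(n)}}(m) = ∑_{j=0}^n h_j Q_{0^{(n−j)}}(m) ∏_{l=j+1}^n ((1−x_l)−x_l)`. -/
theorem stmt6 (M n : ℕ) (hM : 1 ≤ M) (hn : 1 ≤ n) (q : ℝ) (hq : q ∈ Set.Ioo (0 : ℝ) 1)
    (x : ℕ → ℝ) (hx : ∀ j, 1 ≤ j → j ≤ n → (x j = 0 ∨ x j = 1))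
    (m : ℕ) (hm : m ≤ M) (A : Finset (Fin M)) (hA : A.card = m) :
    Qcond M n q x A
      = ∑ j ∈ Finset.range (n + 1),
          hcoef M q x j * Q0c M q A (n - j) *
            ∏ l ∈ Finset.Icc (j + 1) n, ((1 - x l) - x l) := by
  simp only [Qcond_eq_chainWeight hq, Q0c_eq_chainWeight hq]
  refine chainWeight_renewal (a := x) ?affine_kernel (by rw [hcoef]) ?renewal_equation _
  case affine_kernel =>
    exact fun j hj => linkKernel_eq_affine (hx (j + 1) (Nat.le_add_left 1 j) hj)
  case renewal_equation =>
    intro k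
    simp only [hcoef_succ, chainTotal_linkKernel_zero, Fintype.card_fin]
end
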